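/- Let p be a polynomial of degree at most d in n variables and let X be a standard n-dimensional Gaussian vector. Then Pr(|p(X)| ≥ |p|_2 / 2) ≥ 9^{−d} / 2. -/

import Mathlib

open MeasureTheory ProbabilityTheory

/-- The standard Gaussian measure on `ℝ^n`. -/
noncomputable def stdGaussian (n : ℕ) : Measure (Fin n → ℝ) :=
  Measure.pi fun _ => gaussianReal 0 1

/-- `N_Y^θ(X) = cos θ · X + sin θ · Y`. -/
noncomputable def noisy {n : ℕ} (θ : ℝ) (Y X : Fin n → ℝ) : Fin n → ℝ :=
  Real.cos θ • X + Real.sin θ • Y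

/-- The noisy derivative `D_{Y,Z}^θ f (X)`. -/
noncomputable def noisyDeriv {n : ℕ} (θ : ℝ) (Y Z : Fin n → ℝ)
    (f : (Fin n → ℝ) → ℝ) (X : Fin n → ℝ) : ℝ :=
  (f (noisy θ Y X) - f (noisy θ Z X)) / θ

/-- `|f_θ^{(ℓ)}(X)|₂²`, the mean square of the `ℓ`-fold noisy derivative over
independent standard Gaussian directions. -/
noncomputable def derivNormSq (n : ℕ) (θ : ℝ) : ℕ → ((Fin n → ℝ) → ℝ) → (Fin n → ℝ) → ℝ
  | 0, f, X => (f X) ^ 2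
  | (ℓ+1), f, X =>
      ∫ YZ : (Fin n → ℝ) × (Fin n → ℝ),
        derivNormSq n θ ℓ (noisyDeriv θ YZ.1 YZ.2 f) X
        ∂((stdGaussian n).prod (stdGaussian n))

/-- The averaging operator `A^θ f (X) = E_Y[f(N_Y^θ(X))]`. -/
noncomputable def avgOp (n : ℕ) (θ : ℝ) (f : (Fin n → ℝ) → ℝ) (X : Fin n → ℝ) : ℝ :=
  ∫ Y, f (noisy θ Y X) ∂(stdGaussian n)

/-- `q_{ℓ,m}(X) = |p_θ^{(ℓ),m}(X)|₂² = (A^θ)^m |p_θ^{(ℓ)}(X)|₂²`. -/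
noncomputable def qlm (n : ℕ) (θ : ℝ) (p : MvPolynomial (Fin n) ℝ) (ℓ m : ℕ)
    (X : Fin n → ℝ) : ℝ :=
  (avgOp n θ)^[m] (derivNormSq n θ ℓ (fun W => MvPolynomial.eval W p)) X

/-- The Gaussian `L^k` norm of a function on `ℝ^n`. -/
noncomputable def gaussNorm (n : ℕ) (k : ℝ) (p : (Fin n → ℝ) → ℝ) : ℝ :=
  (∫ X, |p X| ^ k ∂(stdGaussian n)) ^ (1 / k)

/-- `f` is a degree-`d` polynomial threshold function on `ℝ^n`. -/
def isPTF (n d : ℕ) (f : (Fin n → ℝ) → ℝ) : Prop :=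
  ∃ p : MvPolynomial (Fin n) ℝ, p.totalDegree ≤ d ∧
    ∀ x, f x = Real.sign (MvPolynomial.eval x p)

/-- `X` is a `k`-independent family of standard Gaussians: any `m ≤ k` distinct
coordinates are jointly distributed as `m` independent standard Gaussians. -/
def kIndepGaussian {Ω : Type} [MeasurableSpace Ω] (n k : ℕ) (P : Measure Ω)
    (X : Ω → (Fin n → ℝ)) : Prop :=
  ∀ m : ℕ, m ≤ k → ∀ ι : Fin m → Fin n, Function.Injective ι →
    Measure.map (fun ω i => X ω (ι i)) P = Measure.pi fun _ : Fin m => gaussianReal 0 1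

/-
Along the Ornstein–Uhlenbeck flow `p ↦ p_s = ∑ s ^ k q_k`, where `p = ∑ q_k` is the decomposition
of `p` into Wiener chaoses, Gaussian integration by parts gives
`d/ds E[p_s ^ 4] = (4 / s) E[p_s ^ 3 L p_s] = (12 / s) ∑ᵢ E[p_s ^ 2 (∂ᵢ p_s) ^ 2]`.
Cauchy–Schwarz bounds this by the fourth moments of the `∂ᵢ p_s`, whose chaoses are those of `p`
lowered by one. By induction on the degree, `√E[p_s ^ 4]` therefore grows no faster than
`∑ s ^ (2 k) 3 ^ k E[q_k ^ 2]`, with equality at `s = 0`. At `s = 1` this yields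
`E[p ^ 4] ≤ 9 ^ d E[p ^ 2] ^ 2`, and the Paley–Zygmund inequality for `p ^ 2` concludes.
-/

lemma hasDerivAt_gaussianPDFReal (μ : ℝ) (v : NNReal) (x : ℝ) :
    HasDerivAt (gaussianPDFReal μ v) (-((x - μ) / v * gaussianPDFReal μ v x)) x := by
  have hexponent : HasDerivAt (fun x : ℝ => -(x - μ) ^ 2 / (2 * v)) (-((x - μ) / v)) x := by
    refine ((((hasDerivAt_id x).sub_const μ).pow 2).neg.div_const (2 * (v : ℝ))).congr_deriv ?_
    simp only [id_eq]
    ring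
  refine (hexponent.exp.const_mul _).congr_deriv ?_
  rw [gaussianPDFReal]
  ring

lemma integrable_gaussianReal_iff {μ : ℝ} {v : NNReal} (hv : v ≠ 0) {f : ℝ → ℝ} :
    Integrable f (gaussianReal μ v) ↔ Integrable fun x => gaussianPDFReal μ v x * f x := by
  rw [gaussianReal_of_var_ne_zero μ hv, integrable_withDensity_iff_integrable_smul'
    (measurable_gaussianPDF μ v) (Filter.Eventually.of_forall fun _ => gaussianPDF_lt_top)]
  simp only [toReal_gaussianPDF, smul_eq_mul]

lemma integral_sub_mul_gaussianReal {μ : ℝ} {v : NNReal} {f f' : ℝ → ℝ}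
    (hderiv : ∀ x, HasDerivAt f (f' x) x) (hf : Integrable f (gaussianReal μ v))
    (hf' : Integrable f' (gaussianReal μ v))
    (hxf : Integrable (fun x => (x - μ) * f x) (gaussianReal μ v)) :
    ∫ x, (x - μ) * f x ∂gaussianReal μ v = v * ∫ x, f' x ∂gaussianReal μ v := by
  rcases eq_or_ne v 0 with rfl | hv
  · simp
  have hv' : (v : ℝ) ≠ 0 := NNReal.coe_ne_zero.mpr hv
  rw [integrable_gaussianReal_iff hv] at hf hf' hxf
  have hparts := integral_mul_deriv_eq_deriv_mul_of_integrable
    (fun x _ => hderiv x) (fun x _ => hasDerivAt_gaussianPDFReal μ v x)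
    ((hxf.const_mul (-(v : ℝ)⁻¹)).congr (.of_forall fun x => by simp only [Pi.mul_apply]; ring))
    (hf'.congr (.of_forall fun x => mul_comm _ _)) (hf.congr (.of_forall fun x => mul_comm _ _))
  simp only [integral_gaussianReal_eq_integral_smul hv, smul_eq_mul]
  calc ∫ x, gaussianPDFReal μ v x * ((x - μ) * f x)
      = -v * ∫ x, f x * -((x - μ) / v * gaussianPDFReal μ v x) := by
        rw [← integral_const_mul]
        congr with x
        field_simp
    _ = v * ∫ x, gaussianPDFReal μ v x * f' x := by
        rw [hparts, neg_mul_neg]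
        simp only [mul_comm]

lemma integrable_pow_gaussianReal (μ : ℝ) (v : NNReal) (k : ℕ) :
    Integrable (fun x => x ^ k) (gaussianReal μ v) := by
  refine (memLp_id_gaussianReal (k : NNReal)).integrable_norm_pow'.mono' (by fun_prop) ?_
  simp

lemma integral_pow_succ_gaussianReal (v : NNReal) (k : ℕ) :
    ∫ x, x ^ (k + 1) ∂gaussianReal 0 v = v * (k * ∫ x, x ^ (k - 1) ∂gaussianReal 0 v) := by
  rw [← integral_const_mul]
  simpa only [sub_zero, ← pow_succ'] using
    integral_sub_mul_gaussianReal (μ := 0) (v := v) (fun x => hasDerivAt_pow k x)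
      (integrable_pow_gaussianReal 0 v k) ((integrable_pow_gaussianReal 0 v (k - 1)).const_mul k)
      (by simpa only [sub_zero, ← pow_succ'] using integrable_pow_gaussianReal 0 v (k + 1))

lemma integral_mul_le_sqrt_mul_sqrt {α : Type*} [MeasurableSpace α] {μ : Measure α}
    {f g : α → ℝ} (hf : MemLp f 2 μ) (hg : MemLp g 2 μ) :
    ∫ x, f x * g x ∂μ ≤ √(∫ x, f x ^ 2 ∂μ) * √(∫ x, g x ^ 2 ∂μ) := by
  have hholder := integral_mul_norm_le_Lp_mul_Lq (μ := μ) (f := f) (g := g)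
    Real.HolderConjugate.two_two (by simpa using hf) (by simpa using hg)
  simp only [Real.norm_eq_abs, Real.rpow_two, sq_abs, ← Real.sqrt_eq_rpow, ← abs_mul] at hholder
  exact (le_abs_self _).trans (abs_integral_le_integral_abs.trans hholder)

theorem paley_zygmund {α : Type*} [MeasurableSpace α] {μ : Measure α} [IsProbabilityMeasure μ]
    {Z : α → ℝ} (hZ : MemLp Z 2 μ) (hmean : 0 ≤ ∫ x, Z x ∂μ) {θ : ℝ} (hθ₀ : 0 ≤ θ)
    (hθ₁ : θ ≤ 1) :
    ((1 - θ) * ∫ x, Z x ∂μ) ^ 2 ≤ (∫ x, Z x ^ 2 ∂μ) * μ.real {x | θ * ∫ y, Z y ∂μ ≤ Z x} := by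
  set m := ∫ x, Z x ∂μ
  set A := {x | θ * m ≤ Z x}
  have hA : NullMeasurableSet A μ := nullMeasurableSet_le aemeasurable_const hZ.1.aemeasurable
  have hint : Integrable Z μ := hZ.integrable one_le_two
  have hcompl : ∫ x in Aᶜ, Z x ∂μ ≤ θ * m :=
    calc ∫ x in Aᶜ, Z x ∂μ ≤ ∫ _ in Aᶜ, θ * m ∂μ := by
          refine setIntegral_mono_ae_restrict hint.integrableOn (integrable_const _) ?_
          filter_upwards [ae_restrict_mem₀ hA.compl] with x hx using le_of_not_ge hx
      _ = μ.real Aᶜ * (θ * m) := by rw [setIntegral_const, smul_eq_mul]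
      _ ≤ θ * m := mul_le_of_le_one_left (mul_nonneg hθ₀ hmean) measureReal_le_one
  have hA_le : ∫ x in A, Z x ∂μ ≤ √(∫ x, Z x ^ 2 ∂μ) * √(μ.real A) :=
    calc ∫ x in A, Z x ∂μ ≤ √(∫ x in A, Z x ^ 2 ∂μ) * √(μ.real A) := by
          simpa using
            integral_mul_le_sqrt_mul_sqrt (hZ.restrict A) (memLp_const (μ := μ.restrict A) 1)
      _ ≤ √(∫ x, Z x ^ 2 ∂μ) * √(μ.real A) := by
          gcongr
          · exact .of_forall fun x => sq_nonneg (Z x)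
          · exact hZ.integrable_sq
          · exact Measure.restrict_le_self
  have hsplit : ∫ x in A, Z x ∂μ + ∫ x in Aᶜ, Z x ∂μ = m := integral_add_compl₀ hA hint
  have hmain : (1 - θ) * m ≤ √((∫ x, Z x ^ 2 ∂μ) * μ.real A) := by
    rw [Real.sqrt_mul (integral_nonneg fun x => sq_nonneg (Z x))]
    linarith
  have hgap : 0 ≤ (1 - θ) * m := mul_nonneg (sub_nonneg.mpr hθ₁) hmean
  have hprod : 0 ≤ (∫ x, Z x ^ 2 ∂μ) * μ.real A :=
    mul_nonneg (integral_nonneg fun x => sq_nonneg (Z x)) measureReal_nonneg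
  exact (Real.le_sqrt hgap hprod).mp hmain

lemma sqrt_le_of_hasDerivAt_le {f f' g g' : ℝ → ℝ} {a b : ℝ} (hab : a ≤ b)
    (hfc : ContinuousOn f (Set.Icc a b)) (hgc : ContinuousOn g (Set.Icc a b))
    (hf : ∀ s ∈ Set.Ioo a b, HasDerivAt f (f' s) s) (hg : ∀ s ∈ Set.Ioo a b, HasDerivAt g (g' s) s)
    (hf₀ : ∀ s ∈ Set.Ioo a b, 0 ≤ f s) (hg₀ : ∀ s ∈ Set.Ioo a b, 0 ≤ g' s)
    (hle : ∀ s ∈ Set.Ioo a b, f' s ≤ 2 * √(f s) * g' s) (ha : √(f a) ≤ g a) :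
    √(f b) ≤ g b := by
  have hreg (ε : ℝ) (hε : 0 < ε) : √(f b + ε) - g b ≤ √(f a + ε) - g a := by
    have hpos {s : ℝ} (hs : s ∈ Set.Ioo a b) : 0 < f s + ε := by linarith [hf₀ s hs]
    have hd {s : ℝ} (hs : s ∈ Set.Ioo a b) : HasDerivAt (fun s => √(f s + ε) - g s)
        (f' s / (2 * √(f s + ε)) - g' s) s :=
      (((hf s hs).add_const ε).sqrt (hpos hs).ne').sub (hg s hs)
    refine antitoneOn_of_hasDerivWithinAt_nonpos (convex_Icc a b) (by fun_prop)
      (fun s hs => (hd (interior_Icc (a := a) ▸ hs)).hasDerivWithinAt) (fun s hs => ?_)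
      (Set.left_mem_Icc.mpr hab) (Set.right_mem_Icc.mpr hab) hab
    rw [interior_Icc] at hs
    have := hpos hs
    have := hg₀ s hs
    rw [sub_nonpos, div_le_iff₀ (by positivity)]
    calc f' s ≤ 2 * √(f s) * g' s := hle s hs
      _ ≤ 2 * √(f s + ε) * g' s := by gcongr; linarith
      _ = g' s * (2 * √(f s + ε)) := mul_comm _ _
  have hlim (c : ℝ) : Filter.Tendsto (fun ε => √(f c + ε) - g c) (nhdsWithin 0 (Set.Ioi 0))
      (nhds (√(f c) - g c)) := by
    have : Continuous fun ε => √(f c + ε) - g c := by fun_prop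
    simpa only [add_zero] using (this.tendsto 0).mono_left nhdsWithin_le_nhds
  have := le_of_tendsto_of_tendsto (hlim b) (hlim a) (eventually_mem_nhdsWithin.mono hreg)
  linarith

section Polynomials

open MvPolynomial

section NumberOperator

variable {σ R : Type*} [CommRing R]

lemma totalDegree_pderiv_le (i : σ) (p : MvPolynomial σ R) :
    (pderiv i p).totalDegree ≤ p.totalDegree - 1 := by
  refine Finset.sup_le fun m hm => ?_
  have hcoeff : coeff (m + Finsupp.single i 1) p ≠ 0 := fun h =>
    mem_support_iff.mp hm (by rw [coeff_pderiv, h, zero_mul])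
  have hle := le_totalDegree (mem_support_iff.mpr hcoeff)
  rw [Finsupp.sum_add_index' (fun _ => rfl) (fun _ _ _ => rfl), Finsupp.sum_single_index rfl] at hle
  omega

lemma pderiv_pderiv_comm (i j : σ) (p : MvPolynomial σ R) :
    pderiv i (pderiv j p) = pderiv j (pderiv i p) := by
  classical
  have hcomm : ⁅pderiv (R := R) i, pderiv j⁆ = 0 := derivation_ext fun k => by
    rw [Derivation.commutator_apply]
    simp [pderiv_X, Pi.single_apply, apply_ite]
  exact sub_eq_zero.mp (DFunLike.congr_fun hcomm p)

variable [Fintype σ]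

lemma totalDegree_sum_X_mul_pderiv_sub_le {d : ℕ} {p : MvPolynomial σ R}
    (hp : p.totalDegree ≤ d + 1) :
    (∑ i, X i * pderiv i p - (d + 1 : R) • p).totalDegree ≤ d := by
  have heuler : ∑ i, X i * pderiv i p - (d + 1 : R) • p =
      ∑ e ∈ Finset.range (p.totalDegree + 1),
        ((e : R) - (d + 1)) • homogeneousComponent e p := by
    conv_lhs => rw [← sum_homogeneousComponent p]
    simp only [map_sum, Finset.mul_sum, Finset.smul_sum]
    rw [Finset.sum_comm, ← Finset.sum_sub_distrib]
    refine Finset.sum_congr rfl fun e _ => ?_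
    rw [(homogeneousComponent_isHomogeneous e p).sum_X_mul_pderiv, sub_smul, Nat.cast_smul_eq_nsmul]
  rw [heuler]
  refine totalDegree_finsetSum_le fun e he => ?_
  rcases (Nat.lt_succ_iff.mp (Finset.mem_range.mp he)).trans hp |>.eq_or_lt with rfl | hlt
  · simp
  · exact (totalDegree_smul_le _ _).trans <|
      (homogeneousComponent_isHomogeneous e p).totalDegree_le.trans (Nat.lt_succ_iff.mp hlt)

variable (σ R) in
/-- The number operator `∑ᵢ (xᵢ ∂ᵢ - ∂ᵢ²)`, i.e. minus the generator of the Ornstein–Uhlenbeck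
semigroup. -/
noncomputable def numberOperator : MvPolynomial σ R →ₗ[R] MvPolynomial σ R :=
  ∑ i, (LinearMap.mulLeft R (X i) ∘ₗ (pderiv i).toLinearMap -
    (pderiv i).toLinearMap ∘ₗ (pderiv i).toLinearMap)

lemma numberOperator_apply (p : MvPolynomial σ R) :
    numberOperator σ R p = ∑ i, (X i * pderiv i p - pderiv i (pderiv i p)) := by
  simp [numberOperator, LinearMap.sum_apply]

lemma pderiv_numberOperator (j : σ) (p : MvPolynomial σ R) :
    pderiv j (numberOperator σ R p) = numberOperator σ R (pderiv j p) + pderiv j p := by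
  classical
  have hterm (i : σ) : pderiv j (X i * pderiv i p - pderiv i (pderiv i p)) =
      (X i * pderiv i (pderiv j p) - pderiv i (pderiv i (pderiv j p))) +
        if i = j then pderiv i p else 0 := by
    rw [map_sub, pderiv_mul, pderiv_pderiv_comm j i, pderiv_pderiv_comm j i, pderiv_pderiv_comm j i,
      pderiv_X, Pi.single_apply, ite_mul, one_mul, zero_mul]
    ring
  simp only [numberOperator_apply, map_sum, hterm, Finset.sum_add_distrib, Finset.sum_ite_eq',
    Finset.mem_univ, if_true]

lemma totalDegree_numberOperator_sub_le {d : ℕ} {p : MvPolynomial σ R}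
    (hp : p.totalDegree ≤ d + 1) :
    (numberOperator σ R p - (d + 1 : R) • p).totalDegree ≤ d := by
  rw [numberOperator_apply, Finset.sum_sub_distrib, sub_right_comm]
  refine (totalDegree_sub _ _).trans
    (max_le (totalDegree_sum_X_mul_pderiv_sub_le hp) (totalDegree_finsetSum_le fun i _ => ?_))
  have := totalDegree_pderiv_le i p
  have := totalDegree_pderiv_le i (pderiv i p)
  omega

variable (σ R) in
/-- The `k`-th Wiener chaos: polynomials of degree at most `k` on which the number operator acts as
multiplication by `k`. Over a field of characteristic zero the eigenvalue forces the degree bound;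
recording it makes the eigenvalue `0` case immediate. -/
noncomputable def wienerChaos (k : ℕ) : Submodule R (MvPolynomial σ R) :=
  Module.End.eigenspace (numberOperator σ R) (k : R) ⊓ restrictTotalDegree σ R k

lemma mem_wienerChaos {k : ℕ} {p : MvPolynomial σ R} :
    p ∈ wienerChaos σ R k ↔ numberOperator σ R p = (k : R) • p ∧ p.totalDegree ≤ k := by
  rw [wienerChaos, Submodule.mem_inf, Module.End.mem_eigenspace_iff, mem_restrictTotalDegree]

lemma exists_eq_C_of_mem_wienerChaos_zero {p : MvPolynomial σ R} (hp : p ∈ wienerChaos σ R 0) :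
    ∃ c, p = C c :=
  ⟨_, totalDegree_eq_zero_iff_eq_C.mp (Nat.le_zero.mp (mem_wienerChaos.mp hp).2)⟩

lemma pderiv_mem_wienerChaos {k : ℕ} {p : MvPolynomial σ R} (hp : p ∈ wienerChaos σ R (k + 1))
    (i : σ) : pderiv i p ∈ wienerChaos σ R k := by
  rw [mem_wienerChaos] at hp ⊢
  refine ⟨?_, (totalDegree_pderiv_le i p).trans (Nat.sub_le_of_le_add hp.2)⟩
  have h := pderiv_numberOperator i p
  rw [hp.1, Derivation.map_smul] at h
  rw [eq_sub_of_add_eq h.symm, Nat.cast_succ, add_smul, one_smul, add_sub_cancel_right]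

theorem exists_sum_mem_wienerChaos {K : Type*} [Field K] [CharZero K] {d : ℕ}
    {p : MvPolynomial σ K} (hp : p.totalDegree ≤ d) :
    ∃ q : ℕ → MvPolynomial σ K,
      (∀ k, q k ∈ wienerChaos σ K k) ∧ ∑ k ∈ Finset.range (d + 1), q k = p := by
  induction d generalizing p with
  | zero =>
    refine ⟨Function.update 0 0 p, (Function.forall_update_iff _ _).mpr ⟨?_, fun _ _ => zero_mem _⟩,
      by simp⟩
    rw [totalDegree_eq_zero_iff_eq_C.mp (Nat.le_zero.mp hp)]
    simp [mem_wienerChaos, numberOperator_apply]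
  | succ d ih =>
    obtain ⟨r, hr, hr_sum⟩ := ih (totalDegree_numberOperator_sub_le hp)
    -- Dividing by the nonzero spectral gaps inverts `numberOperator - (d + 1)` on lower chaoses.
    let s (k : ℕ) : MvPolynomial σ K := ((k : K) - (d + 1))⁻¹ • r k
    have hs (k : ℕ) : s k ∈ wienerChaos σ K k := Submodule.smul_mem _ _ (hr k)
    have hL (k : ℕ) (hk : k ∈ Finset.range (d + 1)) :
        numberOperator σ K (s k) = (d + 1 : K) • s k + r k := by
      have hgap : (k : K) - (d + 1) ≠ 0 :=
        sub_ne_zero.mpr (by exact_mod_cast (Finset.mem_range.mp hk).ne)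
      rw [(mem_wienerChaos.mp (hs k)).1, ← sub_eq_iff_eq_add', ← sub_smul, smul_inv_smul₀ hgap]
    have htop : p - ∑ k ∈ Finset.range (d + 1), s k ∈ wienerChaos σ K (d + 1) := by
      refine mem_wienerChaos.mpr ⟨?_, (totalDegree_sub _ _).trans (max_le hp ?_)⟩
      · rw [map_sub, map_sum, Finset.sum_congr rfl hL, Finset.sum_add_distrib, hr_sum,
          ← Finset.smul_sum]
        push_cast
        module
      · exact totalDegree_finsetSum_le fun k hk =>
          (mem_wienerChaos.mp (hs k)).2.trans (Finset.mem_range.mp hk).le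
    refine ⟨Function.update s (d + 1) (p - ∑ k ∈ Finset.range (d + 1), s k),
      (Function.forall_update_iff _ _).mpr ⟨htop, fun k _ => hs k⟩, ?_⟩
    rw [Finset.sum_range_succ, Function.update_self, Finset.sum_congr rfl fun k hk =>
      Function.update_of_ne (Finset.mem_range.mp hk).ne _ _, add_sub_cancel]

end NumberOperator

section GaussianMean

variable {σ : Type*} [Fintype σ]

variable (σ) in
/-- The law of a family of independent standard Gaussian variables indexed by `σ`. -/
noncomputable abbrev piGaussian : Measure (σ → ℝ) :=
  Measure.pi fun _ => gaussianReal 0 1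

lemma integrable_eval_piGaussian (p : MvPolynomial σ ℝ) :
    Integrable (fun x => eval x p) (piGaussian σ) := by
  induction p using MvPolynomial.induction_on' with
  | monomial m a =>
    simp only [eval_monomial, Finsupp.prod_fintype _ _ fun _ => pow_zero _]
    exact (Integrable.fintype_prod fun i => integrable_pow_gaussianReal 0 1 (m i)).const_mul a
  | add p q hp hq =>
    simp only [map_add]
    exact hp.add hq

lemma memLp_two_eval_piGaussian (p : MvPolynomial σ ℝ) :
    MemLp (fun x => eval x p) 2 (piGaussian σ) := by
  rw [memLp_two_iff_integrable_sq (integrable_eval_piGaussian p).aestronglyMeasurable]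
  exact (integrable_eval_piGaussian (p ^ 2)).congr (.of_forall fun x => map_pow (eval x) p 2)

/-- The expectation `E[p(X)]` for independent standard Gaussian variables `X`, as a linear
functional on polynomials. -/
noncomputable def gaussianMean : MvPolynomial σ ℝ →ₗ[ℝ] ℝ where
  toFun p := ∫ x, eval x p ∂piGaussian σ
  map_add' p q := by
    simp only [map_add]
    exact integral_add (integrable_eval_piGaussian p) (integrable_eval_piGaussian q)
  map_smul' c p := by
    simp only [smul_eval, RingHom.id_apply, smul_eq_mul, integral_const_mul]

lemma gaussianMean_apply (p : MvPolynomial σ ℝ) :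
    gaussianMean p = ∫ x, eval x p ∂piGaussian σ := rfl

lemma gaussianMean_C (c : ℝ) : gaussianMean (C c : MvPolynomial σ ℝ) = c := by
  simp [gaussianMean_apply]

lemma gaussianMean_monomial (m : σ →₀ ℕ) (a : ℝ) :
    gaussianMean (monomial m a) = a * ∏ i, ∫ x, x ^ m i ∂gaussianReal 0 1 := by
  simp only [gaussianMean_apply, eval_monomial, Finsupp.prod_fintype _ _ fun _ => pow_zero _]
  rw [integral_const_mul, integral_fintype_prod_eq_prod (fun i (x : ℝ) => x ^ m i)]

lemma gaussianMean_X_mul (i : σ) (p : MvPolynomial σ ℝ) :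
    gaussianMean (X i * p) = gaussianMean (pderiv i p) := by
  classical
  induction p using MvPolynomial.induction_on' with
  | add p q hp hq => rw [mul_add, map_add, map_add, map_add, hp, hq]
  | monomial m a =>
    rw [X, monomial_mul, one_mul, pderiv_monomial, gaussianMean_monomial, gaussianMean_monomial,
      ← Finset.mul_prod_erase _ _ (Finset.mem_univ i), ← Finset.mul_prod_erase _ _
      (Finset.mem_univ i)]
    have hother : ∀ j ∈ Finset.univ.erase i,
        (Finsupp.single i 1 + m : σ →₀ ℕ) j = (m - Finsupp.single i 1 : σ →₀ ℕ) j :=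
      fun j hj => by simp [(Finset.ne_of_mem_erase hj).symm]
    rw [Finset.prod_congr rfl fun j hj => by rw [hother j hj]]
    simp only [Finsupp.add_apply, Finsupp.tsub_apply, Finsupp.single_eq_same, add_comm 1,
      integral_pow_succ_gaussianReal, NNReal.coe_one]
    ring

lemma gaussianMean_sq_nonneg (p : MvPolynomial σ ℝ) : 0 ≤ gaussianMean (p ^ 2) :=
  integral_nonneg fun x => by simp only [map_pow, Pi.zero_apply, sq_nonneg]

lemma gaussianMean_mul_le_sqrt_mul_sqrt (p q : MvPolynomial σ ℝ) :
    gaussianMean (p * q) ≤ √(gaussianMean (p ^ 2)) * √(gaussianMean (q ^ 2)) := by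
  simpa only [gaussianMean_apply, map_mul, map_pow] using
    integral_mul_le_sqrt_mul_sqrt (memLp_two_eval_piGaussian p) (memLp_two_eval_piGaussian q)

lemma gaussianMean_mul_numberOperator (p q : MvPolynomial σ ℝ) :
    gaussianMean (p * numberOperator σ ℝ q) = ∑ i, gaussianMean (pderiv i p * pderiv i q) := by
  rw [numberOperator_apply, Finset.mul_sum, map_sum]
  refine Finset.sum_congr rfl fun i _ => ?_
  rw [mul_sub, mul_left_comm, map_sub, gaussianMean_X_mul, pderiv_mul, map_add,
    add_sub_cancel_right]

lemma gaussianMean_mul_eq_zero_of_mem_wienerChaos {j k : ℕ} (hjk : j ≠ k) {p q : MvPolynomial σ ℝ}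
    (hp : p ∈ wienerChaos σ ℝ j) (hq : q ∈ wienerChaos σ ℝ k) : gaussianMean (p * q) = 0 := by
  have hsymm : gaussianMean (p * numberOperator σ ℝ q) =
      gaussianMean (q * numberOperator σ ℝ p) := by
    simp only [gaussianMean_mul_numberOperator, mul_comm]
  rw [(mem_wienerChaos.mp hp).1, (mem_wienerChaos.mp hq).1, mul_smul_comm, mul_smul_comm,
    map_smul, map_smul, mul_comm q, ← sub_eq_zero, ← sub_smul, smul_eq_zero] at hsymm
  exact hsymm.resolve_left (sub_ne_zero.mpr (Nat.cast_injective.ne hjk.symm))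

lemma gaussianMean_sum_sq_of_mem_wienerChaos {q : ℕ → MvPolynomial σ ℝ}
    (hq : ∀ k, q k ∈ wienerChaos σ ℝ k) (s : Finset ℕ) :
    gaussianMean ((∑ k ∈ s, q k) ^ 2) = ∑ k ∈ s, gaussianMean (q k ^ 2) := by
  rw [sq, Finset.sum_mul_sum, map_sum]
  refine Finset.sum_congr rfl fun j hj => ?_
  rw [map_sum, Finset.sum_eq_single_of_mem j hj fun k _ hkj =>
    gaussianMean_mul_eq_zero_of_mem_wienerChaos hkj.symm (hq j) (hq k), sq]

lemma sum_gaussianMean_pderiv_sq_of_mem_wienerChaos {k : ℕ} {q : MvPolynomial σ ℝ}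
    (hq : q ∈ wienerChaos σ ℝ k) :
    ∑ i, gaussianMean (pderiv i q ^ 2) = k * gaussianMean (q ^ 2) := by
  simp only [sq]
  rw [← gaussianMean_mul_numberOperator, (mem_wienerChaos.mp hq).1, mul_smul_comm, map_smul,
    smul_eq_mul]

lemma gaussianMean_pow_three_mul_numberOperator_le (p : MvPolynomial σ ℝ) :
    gaussianMean (p ^ 3 * numberOperator σ ℝ p) ≤
      3 * √(gaussianMean (p ^ 4)) * ∑ i, √(gaussianMean (pderiv i p ^ 4)) := by
  rw [gaussianMean_mul_numberOperator, Finset.mul_sum]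
  refine Finset.sum_le_sum fun i _ => ?_
  have hchain : pderiv i (p ^ 3) * pderiv i p = (3 : ℝ) • (p ^ 2 * pderiv i p ^ 2) := by
    rw [Derivation.leibniz_pow, smul_eq_C_mul, map_ofNat]
    simp only [smul_eq_mul, nsmul_eq_mul]
    push_cast
    ring
  have hcs := gaussianMean_mul_le_sqrt_mul_sqrt (p ^ 2) (pderiv i p ^ 2)
  rw [← pow_mul, ← pow_mul] at hcs
  rw [hchain, map_smul, smul_eq_mul, mul_assoc]
  exact mul_le_mul_of_nonneg_left hcs (by norm_num)

end GaussianMean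

section Hypercontractivity

lemma hasDerivAt_map_eval_algebraMap {A : Type*} [CommRing A] [Algebra ℝ A] (φ : A →ₗ[ℝ] ℝ)
    (P : Polynomial A) (s : ℝ) :
    HasDerivAt (fun s => φ (P.eval (algebraMap ℝ A s)))
      (φ (P.derivative.eval (algebraMap ℝ A s))) s := by
  induction P using Polynomial.induction_on' with
  | add P Q hP hQ =>
    simp only [Polynomial.eval_add, map_add]
    exact hP.add hQ
  | monomial k a =>
    have heval (k : ℕ) (a : A) (t : ℝ) :
        φ ((Polynomial.monomial k a).eval (algebraMap ℝ A t)) = t ^ k * φ a := by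
      rw [Polynomial.eval_monomial, ← map_pow, mul_comm, ← Algebra.smul_def, map_smul, smul_eq_mul]
    rw [Polynomial.derivative_monomial, heval, mul_comm a, ← nsmul_eq_mul, map_nsmul, nsmul_eq_mul]
    simp only [heval]
    exact ((hasDerivAt_pow k s).mul_const (φ a)).congr_deriv (by ring)

variable {σ : Type*}

/-- The polynomial in `s` with coefficients `q 0, …, q (N - 1)`. When each `q k` lies in the `k`-th
Wiener chaos, its value at `s = exp (-t)` is the image of `∑ k < N, q k` under the
Ornstein–Uhlenbeck semigroup at time `t`. -/
noncomputable def chaosSeries (q : ℕ → MvPolynomial σ ℝ) (N : ℕ) :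
    Polynomial (MvPolynomial σ ℝ) :=
  ∑ k ∈ Finset.range N, Polynomial.monomial k (q k)

lemma eval_chaosSeries (q : ℕ → MvPolynomial σ ℝ) (N : ℕ) (s : ℝ) :
    (chaosSeries q N).eval (C s) = ∑ k ∈ Finset.range N, s ^ k • q k := by
  simp only [chaosSeries, Polynomial.eval_finsetSum, Polynomial.eval_monomial, smul_eq_C_mul,
    C_pow, mul_comm]

variable [Fintype σ]

lemma smul_eval_derivative_chaosSeries {q : ℕ → MvPolynomial σ ℝ}
    (hq : ∀ k, q k ∈ wienerChaos σ ℝ k) (N : ℕ) (s : ℝ) :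
    s • (chaosSeries q N).derivative.eval (C s) =
      numberOperator σ ℝ ((chaosSeries q N).eval (C s)) := by
  rw [eval_chaosSeries, chaosSeries, Polynomial.derivative_sum, Polynomial.eval_finsetSum,
    Finset.smul_sum, map_sum]
  refine Finset.sum_congr rfl fun k _ => ?_
  rw [Polynomial.derivative_monomial, Polynomial.eval_monomial, map_smul,
    (mem_wienerChaos.mp (hq k)).1]
  rcases k with _ | k
  · simp
  · simp only [smul_eq_C_mul, map_pow, Nat.add_sub_cancel, map_natCast]
    ring

lemma mul_gaussianMean_derivative_chaosSeries_pow_four {q : ℕ → MvPolynomial σ ℝ}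
    (hq : ∀ k, q k ∈ wienerChaos σ ℝ k) (N : ℕ) (s : ℝ) :
    s * gaussianMean ((chaosSeries q N ^ 4).derivative.eval (C s)) =
      4 * gaussianMean ((chaosSeries q N).eval (C s) ^ 3 *
        numberOperator σ ℝ ((chaosSeries q N).eval (C s))) := by
  rw [← smul_eval_derivative_chaosSeries hq, ← smul_eq_mul, ← smul_eq_mul, ← map_smul, ← map_smul,
    Polynomial.derivative_pow, Polynomial.eval_mul, Polynomial.eval_mul, Polynomial.eval_C,
    Polynomial.eval_pow]
  simp only [smul_eq_C_mul, map_ofNat]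
  push_cast
  ring_nf

lemma three_mul_sum_sqrt_gaussianMean_pderiv_pow_four_le {N : ℕ}
    (ih : ∀ q : ℕ → MvPolynomial σ ℝ, (∀ k, q k ∈ wienerChaos σ ℝ k) →
      √(gaussianMean ((∑ k ∈ Finset.range N, q k) ^ 4)) ≤
        ∑ k ∈ Finset.range N, 3 ^ k * gaussianMean (q k ^ 2))
    {q : ℕ → MvPolynomial σ ℝ} (hq : ∀ k, q k ∈ wienerChaos σ ℝ k) :
    3 * ∑ i, √(gaussianMean (pderiv i (∑ k ∈ Finset.range (N + 1), q k) ^ 4)) ≤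
      ∑ k ∈ Finset.range (N + 1), k * (3 ^ k * gaussianMean (q k ^ 2)) := by
  have hpderiv (i : σ) : pderiv i (∑ k ∈ Finset.range (N + 1), q k) =
      ∑ k ∈ Finset.range N, pderiv i (q (k + 1)) := by
    obtain ⟨c, hc⟩ := exists_eq_C_of_mem_wienerChaos_zero (hq 0)
    rw [Finset.sum_range_succ', hc, map_add, pderiv_C, add_zero, map_sum]
  calc 3 * ∑ i, √(gaussianMean (pderiv i (∑ k ∈ Finset.range (N + 1), q k) ^ 4))
      ≤ 3 * ∑ i, ∑ k ∈ Finset.range N, 3 ^ k * gaussianMean (pderiv i (q (k + 1)) ^ 2) := by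
        gcongr with i
        rw [hpderiv]
        exact ih _ fun k => pderiv_mem_wienerChaos (hq (k + 1)) i
    _ = ∑ k ∈ Finset.range N,
          (k + 1 : ℕ) * (3 ^ (k + 1) * gaussianMean (q (k + 1) ^ 2)) := by
        rw [Finset.sum_comm, Finset.mul_sum]
        refine Finset.sum_congr rfl fun k _ => ?_
        rw [← Finset.mul_sum, sum_gaussianMean_pderiv_sq_of_mem_wienerChaos (hq (k + 1))]
        ring
    _ = ∑ k ∈ Finset.range (N + 1), k * (3 ^ k * gaussianMean (q k ^ 2)) := by
        rw [Finset.sum_range_succ', Nat.cast_zero, zero_mul, add_zero]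

lemma gaussianMean_derivative_chaosSeries_pow_four_le {N : ℕ}
    (ih : ∀ q : ℕ → MvPolynomial σ ℝ, (∀ k, q k ∈ wienerChaos σ ℝ k) →
      √(gaussianMean ((∑ k ∈ Finset.range N, q k) ^ 4)) ≤
        ∑ k ∈ Finset.range N, 3 ^ k * gaussianMean (q k ^ 2))
    {q : ℕ → MvPolynomial σ ℝ} (hq : ∀ k, q k ∈ wienerChaos σ ℝ k) {s : ℝ} (hs : 0 < s) :
    gaussianMean ((chaosSeries q (N + 1) ^ 4).derivative.eval (C s)) ≤
      2 * √(gaussianMean ((chaosSeries q (N + 1) ^ 4).eval (C s))) *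
        ∑ k ∈ Finset.range (N + 1),
          ((2 * k : ℕ) * s ^ (2 * k - 1)) * (3 ^ k * gaussianMean (q k ^ 2)) := by
  set p := (chaosSeries q (N + 1)).eval (C s) with hp
  have hgrad := three_mul_sum_sqrt_gaussianMean_pderiv_pow_four_le ih
    (q := fun k => s ^ k • q k) fun k => Submodule.smul_mem _ _ (hq k)
  rw [← eval_chaosSeries, ← hp] at hgrad
  have hweights : s * ∑ k ∈ Finset.range (N + 1),
      ((2 * k : ℕ) * s ^ (2 * k - 1)) * (3 ^ k * gaussianMean (q k ^ 2)) =
        2 * ∑ k ∈ Finset.range (N + 1), k * (3 ^ k * gaussianMean ((s ^ k • q k) ^ 2)) := by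
    rw [Finset.mul_sum, Finset.mul_sum]
    refine Finset.sum_congr rfl fun k _ => ?_
    rw [smul_pow, map_smul, smul_eq_mul, ← pow_mul, mul_comm k 2]
    rcases k with _ | k
    · simp
    · rw [Nat.mul_succ, Nat.add_sub_assoc (by norm_num)]
      push_cast
      ring
  rw [Polynomial.eval_pow, ← hp]
  refine le_of_mul_le_mul_left ?_ hs
  calc s * gaussianMean ((chaosSeries q (N + 1) ^ 4).derivative.eval (C s))
      ≤ 4 * (3 * √(gaussianMean (p ^ 4)) * ∑ i, √(gaussianMean (pderiv i p ^ 4))) := by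
        rw [mul_gaussianMean_derivative_chaosSeries_pow_four hq]
        gcongr
        exact gaussianMean_pow_three_mul_numberOperator_le p
    _ = 4 * √(gaussianMean (p ^ 4)) * (3 * ∑ i, √(gaussianMean (pderiv i p ^ 4))) := by ring
    _ ≤ 4 * √(gaussianMean (p ^ 4)) *
          ∑ k ∈ Finset.range (N + 1), k * (3 ^ k * gaussianMean ((s ^ k • q k) ^ 2)) := by gcongr
    _ = _ := by linear_combination -2 * √(gaussianMean (p ^ 4)) * hweights

-- Hypercontractivity `‖T p‖₄ ≤ ‖p‖₂`, where `T` multiplies the `k`-th chaos by `3 ^ (-k / 2)`,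
-- with `p` replaced by `T⁻¹ p` and both sides squared.
theorem sqrt_gaussianMean_sum_pow_four_le {q : ℕ → MvPolynomial σ ℝ}
    (hq : ∀ k, q k ∈ wienerChaos σ ℝ k) (N : ℕ) :
    √(gaussianMean ((∑ k ∈ Finset.range N, q k) ^ 4)) ≤
      ∑ k ∈ Finset.range N, 3 ^ k * gaussianMean (q k ^ 2) := by
  induction N generalizing q with
  | zero => simp
  | succ N ih =>
    have hf (s : ℝ) := hasDerivAt_map_eval_algebraMap gaussianMean (chaosSeries q (N + 1) ^ 4) s
    have hg (s : ℝ) := HasDerivAt.fun_sum fun k (_ : k ∈ Finset.range (N + 1)) =>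
      (hasDerivAt_pow (2 * k) s).mul_const (3 ^ k * gaussianMean (q k ^ 2))
    have hf₀ (s : ℝ) : 0 ≤ gaussianMean ((chaosSeries q (N + 1) ^ 4).eval (C s)) := by
      rw [Polynomial.eval_pow, pow_mul _ 2 2]
      exact gaussianMean_sq_nonneg _
    have hstart : √(gaussianMean ((chaosSeries q (N + 1) ^ 4).eval (C 0))) =
        ∑ k ∈ Finset.range (N + 1), 0 ^ (2 * k) * (3 ^ k * gaussianMean (q k ^ 2)) := by
      obtain ⟨c, hc⟩ := exists_eq_C_of_mem_wienerChaos_zero (hq 0)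
      rw [Polynomial.eval_pow, eval_chaosSeries, Finset.sum_range_succ', Finset.sum_range_succ']
      have hpow (m : ℕ) : gaussianMean ((C c : MvPolynomial σ ℝ) ^ m) = c ^ m := by
        rw [← C_pow, gaussianMean_C]
      simp [hc, hpow, pow_mul c 2 2, Real.sqrt_sq (sq_nonneg c)]
    have hend := sqrt_le_of_hasDerivAt_le zero_le_one
      (fun s _ => (hf s).continuousAt.continuousWithinAt)
      (fun s _ => (hg s).continuousAt.continuousWithinAt) (fun s _ => hf s) (fun s _ => hg s)
      (fun s _ => hf₀ s)
      (fun s hs => Finset.sum_nonneg fun k _ => by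
        have := hs.1
        have := gaussianMean_sq_nonneg (q k)
        positivity)
      (fun s hs => gaussianMean_derivative_chaosSeries_pow_four_le (fun _ => ih) hq hs.1)
      hstart.le
    simpa only [algebraMap_eq, Polynomial.eval_pow, eval_chaosSeries, one_pow, one_smul, one_mul]
      using hend

theorem gaussianMean_pow_four_le {d : ℕ} {p : MvPolynomial σ ℝ} (hp : p.totalDegree ≤ d) :
    gaussianMean (p ^ 4) ≤ 9 ^ d * gaussianMean (p ^ 2) ^ 2 := by
  obtain ⟨q, hq, rfl⟩ := exists_sum_mem_wienerChaos hp
  have hsqrt := calc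
    √(gaussianMean ((∑ k ∈ Finset.range (d + 1), q k) ^ 4))
      ≤ ∑ k ∈ Finset.range (d + 1), 3 ^ k * gaussianMean (q k ^ 2) :=
        sqrt_gaussianMean_sum_pow_four_le hq (d + 1)
    _ ≤ ∑ k ∈ Finset.range (d + 1), 3 ^ d * gaussianMean (q k ^ 2) := by
        gcongr with k hk
        · exact gaussianMean_sq_nonneg (q k)
        · norm_num
        · exact Nat.lt_succ_iff.mp (Finset.mem_range.mp hk)
    _ = 3 ^ d * gaussianMean ((∑ k ∈ Finset.range (d + 1), q k) ^ 2) := by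
        rw [gaussianMean_sum_sq_of_mem_wienerChaos hq, Finset.mul_sum]
  calc gaussianMean ((∑ k ∈ Finset.range (d + 1), q k) ^ 4)
      ≤ (3 ^ d * gaussianMean ((∑ k ∈ Finset.range (d + 1), q k) ^ 2)) ^ 2 :=
        (Real.sqrt_le_left (mul_nonneg (by positivity) (gaussianMean_sq_nonneg _))).mp hsqrt
    _ = 9 ^ d * gaussianMean ((∑ k ∈ Finset.range (d + 1), q k) ^ 2) ^ 2 := by
        rw [mul_pow, ← pow_mul, mul_comm d, pow_mul]
        norm_num

end Hypercontractivity

lemma gaussNorm_two_eval {n : ℕ} (p : MvPolynomial (Fin n) ℝ) :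
    gaussNorm n 2 (fun x => eval x p) = √(gaussianMean (p ^ 2)) := by
  simp only [gaussNorm, Real.rpow_two, sq_abs, ← map_pow, ← Real.sqrt_eq_rpow]
  rfl

theorem stmt3_general {σ : Type*} [Fintype σ] {d : ℕ} {p : MvPolynomial σ ℝ}
    (hp : p.totalDegree ≤ d) {θ : ℝ} (hθ₀ : 0 ≤ θ) (hθ₁ : θ ≤ 1) :
    ((9 : ℝ) ^ d)⁻¹ * (1 - θ ^ 2) ^ 2 ≤
      (piGaussian σ).real {x | θ * √(gaussianMean (p ^ 2)) ≤ |eval x p|} := by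
  have hθ_sq : θ ^ 2 ≤ 1 := pow_le_one₀ hθ₀ hθ₁
  rcases (gaussianMean_sq_nonneg p).eq_or_lt with hm | hm
  · simp only [← hm, Real.sqrt_zero, mul_zero, abs_nonneg, Set.ofPred_true, probReal_univ]
    exact mul_le_one₀ (inv_le_one_of_one_le₀ (one_le_pow₀ (by norm_num))) (sq_nonneg _)
      (pow_le_one₀ (sub_nonneg.mpr hθ_sq) (sub_le_self 1 (sq_nonneg θ)))
  have hset : {x | θ ^ 2 * gaussianMean (p ^ 2) ≤ eval x (p ^ 2)} =
      {x | θ * √(gaussianMean (p ^ 2)) ≤ |eval x p|} := by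
    ext x
    rw [Set.mem_ofPred_eq, Set.mem_ofPred_eq, map_pow (eval x),
      ← pow_le_pow_iff_left₀ (mul_nonneg hθ₀ (Real.sqrt_nonneg _)) (abs_nonneg (eval x p))
      two_ne_zero, mul_pow, Real.sq_sqrt hm.le, sq_abs]
  have hpz := paley_zygmund (memLp_two_eval_piGaussian (p ^ 2))
    (gaussianMean_sq_nonneg p) (sq_nonneg θ) hθ_sq
  simp only [← gaussianMean_apply, ← map_pow, ← pow_mul, hset] at hpz
  rw [inv_mul_le_iff₀ (by positivity)]
  refine le_of_mul_le_mul_right ?_ (pow_pos hm 2)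
  calc (1 - θ ^ 2) ^ 2 * gaussianMean (p ^ 2) ^ 2
      ≤ gaussianMean (p ^ 4) *
          (piGaussian σ).real {x | θ * √(gaussianMean (p ^ 2)) ≤ |eval x p|} := by
        rw [← mul_pow]
        exact hpz
    _ ≤ 9 ^ d * gaussianMean (p ^ 2) ^ 2 *
          (piGaussian σ).real {x | θ * √(gaussianMean (p ^ 2)) ≤ |eval x p|} := by
        gcongr
        exact gaussianMean_pow_four_le hp
    _ = _ := mul_right_comm _ _ _

end Polynomials

/-- Anti-concentration from hypercontractivity:
`Pr(|p(X)| ≥ |p|₂ / 2) ≥ 9^{-d}/2`. -/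
theorem stmt3 (n d : ℕ) (p : MvPolynomial (Fin n) ℝ) (hp : p.totalDegree ≤ d) :
    ((9:ℝ) ^ d)⁻¹ / 2 ≤
      ((stdGaussian n)
        {X | gaussNorm n 2 (fun W => MvPolynomial.eval W p) / 2 ≤
              |MvPolynomial.eval X p|}).toReal := by
  rw [gaussNorm_two_eval, div_eq_mul_inv, div_eq_inv_mul]
  exact (mul_le_mul_of_nonneg_left (by norm_num) (by positivity)).trans
    (stmt3_general hp (θ := 2⁻¹) (by norm_num) (by norm_num))
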